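/- arXiv:2106.10647 — 2 statements merged into one kernel-verified Lean document; each statement's English description precedes it below -/
import Mathlib

section
/- Let I ⊆ ℝ be a closed bounded interval and f : I → I a continuous map admitting no 2-cycle. Then f is universal for the first Sharkovsky class if and only if there exists a point p ∈ I with f(p) = p such that for every ε > 0 there exists δ > 0 with [p − δ, p + δ] ⊆ f([p, p + ε] ∩ I) and [p − δ, p + δ] ⊆ f([p − ε, p] ∩ I). -/
/-- `f`, viewed as an interval map on `[a,b]`, is universal for the first Sharkovsky
class: every orbit pattern of any interval map with no 2-cycle occurs as an orbit
pattern of `f`. -/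
def IsUniversalF1 (a b : ℝ) (f : ℝ → ℝ) : Prop :=
  ∀ c d : ℝ, c ≤ d → ∀ g : ℝ → ℝ,
    ContinuousOn g (Set.Icc c d) →
    Set.MapsTo g (Set.Icc c d) (Set.Icc c d) →
    (¬ ∃ x ∈ Set.Icc c d, ∃ y ∈ Set.Icc c d, x ≠ y ∧ g x = y ∧ g y = x) →
    ∀ p ∈ Set.Icc c d, ∃ q ∈ Set.Icc a b,
      ∀ m n : ℕ, (g^[m] p < g^[n] p ↔ f^[m] q < f^[n] q)

/-! An orbit of a map without 2-cycles never returns past a point it has left (Coppel): if it first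
moves up from `x`, it stays above `x` forever. Hence its order pattern is encoded by a word in the
letters up, down and rest.

If `f` folds both sides of a fixed point `p` over neighbourhoods of `p`, then any word is realized:
put the orbit points going up to the left of `p` and those going down to the right, in compact
intervals shrinking so fast that each is covered by the image of its predecessor and all later ones
lie on the prescribed side of it. Conversely, a single word in which every pair of consecutive
directions recurs forces such a `p`: the points going up increase to a limit, those going down
decrease to a limit, and the recurring pairs identify the two limits and show that `f` takes values
on both sides of `p` arbitrarily near `p`, from either side. The map `x / 2 * cos (π * log₂ x)` has
an orbit with such a word.
-/

section OrderCodes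

/-- The sequence `x` follows the word `w` of comparisons: from the term `x m`, all later terms lie
in the direction `w m`, where `.lt` means that they are larger than `x m`. -/
def HasOrderCode {α : Type*} [LinearOrder α] (w : ℕ → Ordering) (x : ℕ → α) : Prop :=
  ∀ ⦃m n⦄, m < n → cmp (x m) (x n) = w m

variable {α β : Type*} [LinearOrder α] [LinearOrder β] {w : ℕ → Ordering} {x : ℕ → α} {y : ℕ → β}

lemma HasOrderCode.cmp_eq_cmp (hx : HasOrderCode w x) (hy : HasOrderCode w y) (m n : ℕ) :
    cmp (x m) (x n) = cmp (y m) (y n) := by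
  rcases lt_trichotomy m n with h | rfl | h
  · rw [hx h, hy h]
  · rw [cmp_self_eq_eq, cmp_self_eq_eq]
  · rw [cmp_eq_cmp_symm, hx h, hy h]

lemma HasOrderCode.of_lt_iff_lt (hy : HasOrderCode w y)
    (hxy : ∀ m n, y m < y n ↔ x m < x n) : HasOrderCode w x := by
  intro m n hmn
  rw [← hy hmn]
  simp only [cmp, cmpUsing, hxy]

lemma HasOrderCode.toDual (hx : HasOrderCode w x) :
    HasOrderCode (fun n => (w n).swap) (fun n => OrderDual.toDual (x n)) := by
  intro m n hmn
  rw [cmp_toDual, ← cmp_swap, hx hmn]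

lemma hasOrderCode_cmp_zero_of_strictAnti_abs {G : Type*} [AddCommGroup G] [LinearOrder G]
    [IsOrderedAddMonoid G] {x : ℕ → G} (hx : StrictAnti fun n => |x n|) :
    HasOrderCode (fun n => cmp (x n) 0) x := by
  intro m n hmn
  have hlt : |x n| < |x m| := hx hmn
  rcases lt_trichotomy (x m) 0 with h | h | h
  · simp only [h.cmp_eq_lt, cmp_eq_lt_iff]
    rw [abs_of_neg h] at hlt
    exact lt_of_neg_lt_neg ((neg_le_abs _).trans_lt hlt)
  · rw [h, abs_zero] at hlt
    exact absurd hlt (abs_nonneg _).not_gt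
  · simp only [h.cmp_eq_gt, cmp_eq_gt_iff]
    rw [abs_of_pos h] at hlt
    exact (le_abs_self _).trans_lt hlt

end OrderCodes

section Coppel

open Set Function

variable {α : Type*} [ConditionallyCompleteLinearOrder α] [TopologicalSpace α] [OrderTopology α]
  [DenselyOrdered α] {a b x : α} {f : α → α}

lemma lt_map_map_of_lt_map (hf : ContinuousOn f (Icc a b)) (hmaps : MapsTo f (Icc a b) (Icc a b))
    (hno2 : ∀ x ∈ Icc a b, f (f x) = x → f x = x) (hx : x ∈ Icc a b) (hlt : x < f x) :
    x < f (f x) := by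
  by_contra! hle
  have hff : ContinuousOn (f ∘ f) (Icc a b) := hf.comp hf hmaps
  have hsub : Icc a x ⊆ Icc a b := Icc_subset_Icc_right hx.2
  have hcompact : IsCompact {t ∈ Icc a x | (f ∘ f) t = t} :=
    isCompact_Icc.of_isClosed_subset
      (((hff.mono hsub).prodMk continuousOn_id).preimage_isClosed_of_isClosed isClosed_Icc
        isClosed_diagonal) (sep_subset _ _)
  have ha : a ∈ Icc a b := left_mem_Icc.2 (hx.1.trans hx.2)
  obtain ⟨u, ⟨hu, hffu⟩, hu_max⟩ := hcompact.exists_isGreatest <|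
    exists_mem_Icc_isFixedPt (hff.mono hsub) hx.1 (hmaps (hmaps ha)).1 hle
  have hfu : f u = u := hno2 u (hsub hu) hffu
  -- A preimage of `x` between `u` and `x` moves up under `f ∘ f`, forcing a larger fixed point.
  obtain ⟨t, ht, rfl⟩ := intermediate_value_Icc hu.2
    (hf.mono ((Icc_subset_Icc_left hu.1).trans hsub)) ⟨hfu.trans_le hu.2, hlt.le⟩
  have htx : t ≠ f t := fun h => hlt.ne (congrArg f h)
  have hat : a ≤ t := hu.1.trans ht.1
  obtain ⟨z, hz, hffz⟩ := exists_mem_Icc_isFixedPt (hff.mono ((Icc_subset_Icc_left hat).trans hsub))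
    ht.2 (ht.2.trans hlt.le) hle
  have hzu : z ≤ u := hu_max ⟨⟨hat.trans hz.1, hz.2⟩, hffz⟩
  have htu : t = u := le_antisymm (hz.1.trans hzu) ht.1
  exact htx (by rw [htu, hfu])

lemma mapsTo_Icc_Iio_of_map_lt (hf : ContinuousOn f (Icc a b))
    (hmaps : MapsTo f (Icc a b) (Icc a b)) (hno2 : ∀ x ∈ Icc a b, f (f x) = x → f x = x)
    (hx : x ∈ Icc a b) (hlt : f x < x) : MapsTo f (Icc (f x) x) (Iio x) := by
  intro y hy
  refine lt_of_not_ge fun hle : x ≤ f y => ?_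
  have hsub : Icc y x ⊆ Icc a b := Icc_subset_Icc ((hmaps hx).1.trans hy.1) hx.2
  obtain ⟨z, hz, hfz⟩ := intermediate_value_Icc' hy.2 (hf.mono hsub) ⟨hlt.le, hle⟩
  have hzx : z < x := hz.2.lt_of_ne fun h => hlt.ne (h ▸ hfz)
  have hz_lt := lt_map_map_of_lt_map hf hmaps hno2 (hsub hz) (hzx.trans_eq hfz.symm)
  rw [hfz] at hz_lt
  exact hz_lt.not_ge (hy.1.trans hz.1)

theorem lt_iterate_of_lt_map (hf : ContinuousOn f (Icc a b)) (hmaps : MapsTo f (Icc a b) (Icc a b))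
    (hno2 : ∀ x ∈ Icc a b, f (f x) = x → f x = x) (hx : x ∈ Icc a b) (hlt : x < f x) (n : ℕ) :
    x < f^[n + 1] x := by
  induction n using Nat.strong_induction_on with
  | _ n ih =>
    obtain _ | n := n
    · exact hlt
    by_contra! hle
    rw [iterate_succ_apply'] at hle
    have hxm := ih n n.lt_succ_self
    have htrap := mapsTo_Icc_Iio_of_map_lt hf hmaps hno2 (hmaps.iterate (n + 1) hx)
      (hle.trans_lt hxm)
    -- As long as the orbit stays above `x`, it cannot climb to `f^[n + 1] x`.
    have hbelow : ∀ i ≤ n + 1, f^[i] x < f^[n + 1] x := by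
      intro i hi
      induction i with
      | zero => exact hxm
      | succ i ihi =>
        have hxi : x ≤ f^[i] x := by
          obtain _ | i := i
          · exact le_rfl
          · exact (ih i (by lia)).le
        rw [iterate_succ_apply' f i]
        exact htrap ⟨hle.trans hxi, (ihi (by lia)).le⟩
    exact (hbelow _ le_rfl).false

theorem iterate_lt_of_map_lt (hf : ContinuousOn f (Icc a b)) (hmaps : MapsTo f (Icc a b) (Icc a b))
    (hno2 : ∀ x ∈ Icc a b, f (f x) = x → f x = x) (hx : x ∈ Icc a b) (hlt : f x < x) (n : ℕ) :
    f^[n + 1] x < x := by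
  have hdual : Icc (OrderDual.toDual b) (OrderDual.toDual a) = OrderDual.ofDual ⁻¹' Icc a b :=
    Icc_toDual
  refine lt_iterate_of_lt_map (α := αᵒᵈ) (a := OrderDual.toDual b) (b := OrderDual.toDual a)
    (f := f) (x := x) ?_ ?_ ?_ ?_ hlt n
  all_goals rw [hdual]; assumption

theorem hasOrderCode_iterate (hf : ContinuousOn f (Icc a b))
    (hmaps : MapsTo f (Icc a b) (Icc a b)) (hno2 : ∀ x ∈ Icc a b, f (f x) = x → f x = x)
    (hx : x ∈ Icc a b) :
    HasOrderCode (fun n => cmp (f^[n] x) (f (f^[n] x))) (fun n => f^[n] x) := by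
  intro m n hmn
  obtain ⟨k, rfl⟩ := Nat.exists_eq_add_of_lt hmn
  have hm := hmaps.iterate m hx
  simp only [show m + k + 1 = (k + 1) + m by lia, iterate_add_apply f (k + 1) m]
  generalize f^[m] x = y at hm
  rcases lt_trichotomy y (f y) with h | h | h
  · rw [h.cmp_eq_lt, (lt_iterate_of_lt_map hf hmaps hno2 hm h k).cmp_eq_lt]
  · rw [iterate_fixed h.symm, ← h]
  · rw [h.cmp_eq_gt, (iterate_lt_of_map_lt hf hmaps hno2 hm h k).cmp_eq_gt]

end Coppel

section Shadowing

open Set Function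

variable {X : Type*} {f : X → X} {K : ℕ → Set X}

lemma subset_image_iterate (hcover : ∀ n, K (n + 1) ⊆ f '' K n) (n : ℕ) :
    K n ⊆ f^[n] '' {x | ∀ i ≤ n, f^[i] x ∈ K i} := by
  induction n with
  | zero => exact fun y hy => ⟨y, fun i hi => by rwa [Nat.le_zero.1 hi], rfl⟩
  | succ n ih =>
    intro y hy
    obtain ⟨z, hz, rfl⟩ := hcover n hy
    obtain ⟨x, hx, rfl⟩ := ih hz
    refine ⟨x, fun i hi => ?_, iterate_succ_apply' f n x⟩
    rcases Nat.le_succ_iff.1 hi with hi | rfl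
    · exact hx i hi
    · rwa [iterate_succ_apply']

variable [TopologicalSpace X]

lemma isClosed_setOf_iterate_mem (hf : ∀ n, ContinuousOn f (K n)) (hK : ∀ n, IsClosed (K n))
    (n : ℕ) : IsClosed {x | ∀ i ≤ n, f^[i] x ∈ K i} := by
  suffices IsClosed {x | ∀ i ≤ n, f^[i] x ∈ K i} ∧
      ContinuousOn f^[n] {x | ∀ i ≤ n, f^[i] x ∈ K i} from this.1
  induction n with
  | zero => simpa [continuousOn_id] using hK 0
  | succ n ih =>
    have hcont : ContinuousOn f^[n + 1] {x | ∀ i ≤ n, f^[i] x ∈ K i} := by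
      rw [iterate_succ']
      exact (hf n).comp ih.2 fun x hx => hx n le_rfl
    have hsplit : {x | ∀ i ≤ n + 1, f^[i] x ∈ K i} =
        {x | ∀ i ≤ n, f^[i] x ∈ K i} ∩ f^[n + 1] ⁻¹' K (n + 1) := by
      ext x
      simp only [Nat.le_succ_iff, or_imp, forall_and, forall_eq, mem_ofPred_eq, mem_inter_iff,
        mem_preimage]
    rw [hsplit]
    exact ⟨hcont.preimage_isClosed_of_isClosed ih.1 (hK _), hcont.mono inter_subset_left⟩

theorem exists_forall_iterate_mem (hf : ∀ n, ContinuousOn f (K n)) (hK₀ : IsCompact (K 0))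
    (hK : ∀ n, IsClosed (K n)) (hne : ∀ n, (K n).Nonempty)
    (hcover : ∀ n, K (n + 1) ⊆ f '' K n) : ∃ q, ∀ n, f^[n] q ∈ K n := by
  obtain ⟨q, hq⟩ := IsCompact.nonempty_iInter_of_sequence_nonempty_isCompact_isClosed
    (fun n => {x | ∀ i ≤ n, f^[i] x ∈ K i})
    (fun n x hx i hi => hx i (hi.trans n.le_succ))
    (fun n => ((hne n).mono (subset_image_iterate hcover n)).of_image)
    (by simpa using hK₀) (isClosed_setOf_iterate_mem hf hK)
  exact ⟨q, fun n => mem_iInter.1 hq n n le_rfl⟩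

end Shadowing

section Covering

open Set Filter Function Topology

lemma exists_uIcc_subset_of_frequently {α : Type*} [LinearOrder α] [TopologicalSpace α]
    [OrderTopology α] {s W : Set α} [OrdConnected s] {P Q : α → Prop} {q : α}
    (hP : ∃ᶠ u in 𝓝[s] q, P u) (hQ : ∃ᶠ v in 𝓝[s] q, Q v) (hW : W ∈ 𝓝[s] q) :
    ∃ u v, P u ∧ Q v ∧ uIcc u v ⊆ W ∩ s := by
  obtain ⟨U, hU, hUW⟩ := mem_nhdsWithin_iff_exists_mem_nhds_inter.1 hW
  obtain ⟨l, r, -, hlr, hlrU⟩ := exists_Icc_mem_subset_of_mem_nhds hU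
  have hmem : ∀ᶠ x in 𝓝[s] q, x ∈ Icc l r ∩ s :=
    inter_mem (mem_nhdsWithin_of_mem_nhds hlr) self_mem_nhdsWithin
  obtain ⟨u, hu, hus⟩ := (hP.and_eventually hmem).exists
  obtain ⟨v, hv, hvs⟩ := (hQ.and_eventually hmem).exists
  have huv : uIcc u v ⊆ Icc l r ∩ s := OrdConnected.uIcc_subset inferInstance hus hvs
  exact ⟨u, v, hu, hv, fun x hx => ⟨hUW ⟨hlrU (huv hx).1, (huv hx).2⟩, (huv hx).2⟩⟩

variable {α : Type*} [ConditionallyCompleteLinearOrder α] [TopologicalSpace α] [OrderTopology α]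
  [DenselyOrdered α] {f : α → α} {a b p q : α}

lemma image_uIcc_mem_nhds {u v : α} (hf : ContinuousOn f (uIcc u v)) (hu : f u < p)
    (hv : p < f v) : f '' uIcc u v ∈ 𝓝 p := by
  have hsub := intermediate_value_uIcc hf
  rw [uIcc_of_le (hu.trans hv).le] at hsub
  exact mem_of_superset (Icc_mem_nhds hu hv) hsub

lemma nhds_le_map_nhdsWithin_of_frequently {s : Set α} [OrdConnected s] (hf : ContinuousOn f s)
    (hlt : ∃ᶠ u in 𝓝[s] q, f u < p) (hgt : ∃ᶠ v in 𝓝[s] q, p < f v) :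
    𝓝 p ≤ map f (𝓝[s] q) := by
  intro t ht
  obtain ⟨u, v, hu, hv, huv⟩ := exists_uIcc_subset_of_frequently hlt hgt (mem_map.1 ht)
  exact mem_of_superset (image_uIcc_mem_nhds (hf.mono (huv.trans inter_subset_right)) hu hv)
    (image_subset_iff.2 (huv.trans inter_subset_left))

variable [NoMinOrder α] [NoMaxOrder α]

lemma exists_uIcc_image_mem_nhds {s U : Set α} [OrdConnected s] (hf : ContinuousOn f s)
    (hfp : f p = p) (hcover : 𝓝 p ≤ map f (𝓝[s] p)) (hU : U ∈ 𝓝 p) :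
    ∃ u v, u ≠ p ∧ v ≠ p ∧ uIcc u v ⊆ U ∩ s ∧ f '' uIcc u v ∈ 𝓝 p := by
  obtain ⟨u, v, hu, hv, huv⟩ := exists_uIcc_subset_of_frequently
    (frequently_map.1 ((frequently_lt_nhds p).filter_mono hcover))
    (frequently_map.1 ((frequently_gt_nhds p).filter_mono hcover))
    (mem_nhdsWithin_of_mem_nhds hU)
  refine ⟨u, v, ?_, ?_, huv, image_uIcc_mem_nhds (hf.mono (huv.trans inter_subset_right)) hu hv⟩
  · rintro rfl
    exact hu.ne hfp
  · rintro rfl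
    exact hv.ne hfp.symm

/- The two conditions on `V` at `p` cover all words at once: once the orbit rests, `K` and `V` are
both the singleton `{p}`, and before that `V` is a neighbourhood of `p`. -/
lemma exists_isCompact_forall_cmp_eq (hf : ContinuousOn f (Icc a b)) (hp : p ∈ Icc a b)
    (hfp : f p = p) (hleft : 𝓝 p ≤ map f (𝓝[Icc a p] p)) (hright : 𝓝 p ≤ map f (𝓝[Icc p b] p))
    (σ : Ordering) (U : Set α) (hpU : p ∈ U) (hU : σ ≠ .eq → U ∈ 𝓝 p) :
    ∃ K V, IsCompact K ∧ K ⊆ U ∩ Icc a b ∧ p ∈ V ∧ (σ ≠ .eq → V ∈ 𝓝 p) ∧ V ⊆ U ∩ f '' K ∧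
      ∀ x ∈ K, ∀ y ∈ V, cmp x y = σ := by
  have hap : Icc a p ⊆ Icc a b := Icc_subset_Icc_right hp.2
  have hpb : Icc p b ⊆ Icc a b := Icc_subset_Icc_left hp.1
  cases σ with
  | eq =>
    refine ⟨{p}, {p}, isCompact_singleton, by simpa using ⟨hpU, hp⟩, rfl, (absurd rfl ·),
      by simpa using ⟨hpU, hfp.symm⟩, ?_⟩
    rintro x rfl y rfl
    exact cmp_self_eq_eq _
  | lt =>
    obtain ⟨u, v, hup, hvp, huv, him⟩ :=
      exists_uIcc_image_mem_nhds (hf.mono hap) hfp hleft (hU (by decide))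
    have hmax : max u v < p := max_lt ((huv left_mem_uIcc).2.2.lt_of_ne hup)
      ((huv right_mem_uIcc).2.2.lt_of_ne hvp)
    have hV : (U ∩ f '' uIcc u v) ∩ Ioi (max u v) ∈ 𝓝 p :=
      inter_mem (inter_mem (hU (by decide)) him) (Ioi_mem_nhds hmax)
    exact ⟨uIcc u v, _, isCompact_uIcc, huv.trans (inter_subset_inter_right U hap),
      mem_of_mem_nhds hV, fun _ => hV, inter_subset_left,
      fun x hx y hy => (hx.2.trans_lt hy.2).cmp_eq_lt⟩
  | gt =>
    obtain ⟨u, v, hup, hvp, huv, him⟩ :=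
      exists_uIcc_image_mem_nhds (hf.mono hpb) hfp hright (hU (by decide))
    have hmin : p < min u v := lt_min ((huv left_mem_uIcc).2.1.lt_of_ne' hup)
      ((huv right_mem_uIcc).2.1.lt_of_ne' hvp)
    have hV : (U ∩ f '' uIcc u v) ∩ Iio (min u v) ∈ 𝓝 p :=
      inter_mem (inter_mem (hU (by decide)) him) (Iio_mem_nhds hmin)
    exact ⟨uIcc u v, _, isCompact_uIcc, huv.trans (inter_subset_inter_right U hpb),
      mem_of_mem_nhds hV, fun _ => hV, inter_subset_left,
      fun x hx y hy => (hy.2.trans_le hx.1).cmp_eq_gt⟩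

theorem exists_hasOrderCode_iterate (hf : ContinuousOn f (Icc a b)) (hp : p ∈ Icc a b)
    (hfp : f p = p) (hleft : 𝓝 p ≤ map f (𝓝[Icc a p] p)) (hright : 𝓝 p ≤ map f (𝓝[Icc p b] p))
    {w : ℕ → Ordering} (hw : ∀ n, w n = .eq → w (n + 1) = .eq) :
    ∃ q ∈ Icc a b, HasOrderCode w (fun n => f^[n] q) := by
  choose! K V hK_compact hK_subset hpV hV_nhds hV_subset hcmp using
    exists_isCompact_forall_cmp_eq hf hp hfp hleft hright
  let U : ℕ → Set α := fun n => Nat.rec univ (fun n U => V (w n) U) n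
  have hU : ∀ n, p ∈ U n ∧ (w n ≠ .eq → U n ∈ 𝓝 p) := by
    intro n
    induction n with
    | zero => exact ⟨mem_univ p, fun _ => univ_mem⟩
    | succ n ih =>
      exact ⟨hpV _ _ ih.1 ih.2, fun h => hV_nhds _ _ ih.1 ih.2 fun h' => h (hw n h')⟩
  have hU_succ : ∀ n, U (n + 1) ⊆ U n ∩ f '' K (w n) (U n) := fun n =>
    hV_subset _ _ (hU n).1 (hU n).2
  have hU_anti : Antitone U := antitone_nat_of_succ_le fun n => (hU_succ n).trans inter_subset_left
  have hK : ∀ n, IsCompact (K (w n) (U n)) := fun n => hK_compact _ _ (hU n).1 (hU n).2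
  have hKU : ∀ n, K (w n) (U n) ⊆ U n ∩ Icc a b := fun n => hK_subset _ _ (hU n).1 (hU n).2
  obtain ⟨q, hq⟩ := exists_forall_iterate_mem (f := f) (K := fun n => K (w n) (U n))
    (fun n => hf.mono ((hKU n).trans inter_subset_right)) (hK 0) (fun n => (hK n).isClosed)
    (fun n => Nonempty.of_image ⟨p, (hU_succ n (hU (n + 1)).1).2⟩)
    (fun n => (hKU (n + 1)).trans (inter_subset_left.trans ((hU_succ n).trans inter_subset_right)))
  refine ⟨q, (hKU 0 (hq 0)).2, fun m n hmn => ?_⟩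
  exact hcmp _ _ (hU m).1 (hU m).2 _ (hq m) _ (hU_anti hmn (hKU n (hq n)).1)

end Covering

section Forcing

open Set Filter Topology

lemma HasOrderCode.exists_tendsto_of_frequently_lt {α : Type*} [ConditionallyCompleteLinearOrder α]
    [TopologicalSpace α] [OrderTopology α] {w : ℕ → Ordering} {x : ℕ → α} (hx : HasOrderCode w x)
    (hbdd : BddAbove (range x)) (hw : ∃ᶠ n in atTop, w n = .lt) :
    ∃ L, Tendsto x (atTop ⊓ 𝓟 {n | w n = .lt}) (𝓝 L) ∧ ∀ n, w n = .lt → x n < L := by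
  have hlt : ∀ ⦃m n⦄, m < n → w m = .lt → x m < x n := fun m n hmn hm =>
    (cmp_eq_lt_iff _ _).1 ((hx hmn).trans hm)
  have hne : (x '' {n | w n = .lt}).Nonempty := Set.Nonempty.image x hw.exists
  have hle : ∀ n, w n = .lt → x n ≤ sSup (x '' {n | w n = .lt}) := fun n hn =>
    le_csSup (hbdd.mono (image_subset_range _ _)) (mem_image_of_mem x hn)
  refine ⟨sSup (x '' {n | w n = .lt}), tendsto_order.2 ⟨fun l hl => ?_, fun u hu => ?_⟩, ?_⟩
  · obtain ⟨_, ⟨m, hm, rfl⟩, hlm⟩ := exists_lt_of_lt_csSup hne hl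
    exact ((eventually_gt_atTop m).filter_mono inf_le_left).mono fun n hn => hlm.trans (hlt hn hm)
  · exact eventually_inf_principal.2 (Eventually.of_forall fun n hn => (hle n hn).trans_lt hu)
  · intro m hm
    obtain ⟨n, hn, hmn⟩ := (hw.and_eventually (eventually_gt_atTop m)).exists
    exact (hlt hmn hm).trans_le (hle n hn)

lemma HasOrderCode.exists_tendsto_of_frequently_gt {α : Type*} [ConditionallyCompleteLinearOrder α]
    [TopologicalSpace α] [OrderTopology α] {w : ℕ → Ordering} {x : ℕ → α} (hx : HasOrderCode w x)
    (hbdd : BddBelow (range x)) (hw : ∃ᶠ n in atTop, w n = .gt) :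
    ∃ L, Tendsto x (atTop ⊓ 𝓟 {n | w n = .gt}) (𝓝 L) ∧ ∀ n, w n = .gt → L < x n := by
  have hswap : ∀ o : Ordering, o.swap = .lt ↔ o = .gt := by decide
  have h := hx.toDual.exists_tendsto_of_frequently_lt hbdd (by simpa only [hswap] using hw)
  simp only [hswap] at h
  exact h

lemma map_eq_of_frequently_mem {X : Type*} [TopologicalSpace X] [T2Space X] {f : X → X} {s : Set X}
    {x : ℕ → X} {A B : Set ℕ} {y z : X} (hf : ContinuousWithinAt f s y) (hxs : ∀ n, x n ∈ s)
    (hfx : ∀ n, f (x n) = x (n + 1)) (hy : Tendsto x (atTop ⊓ 𝓟 A) (𝓝 y))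
    (hz : Tendsto x (atTop ⊓ 𝓟 B) (𝓝 z)) (hAB : ∃ᶠ n in atTop, n ∈ A ∧ n + 1 ∈ B) : f y = z := by
  have := frequently_iff_neBot.1 hAB
  have hA : atTop ⊓ 𝓟 {n | n ∈ A ∧ n + 1 ∈ B} ≤ atTop ⊓ 𝓟 A :=
    inf_le_inf_left _ (principal_mono.2 fun n hn => hn.1)
  have hB : Tendsto (· + 1) (atTop ⊓ 𝓟 {n | n ∈ A ∧ n + 1 ∈ B}) (atTop ⊓ 𝓟 B) :=
    (tendsto_add_atTop_nat 1).inf (tendsto_principal_principal.2 fun n hn => hn.2)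
  have hfy : Tendsto (fun n => f (x n)) (atTop ⊓ 𝓟 {n | n ∈ A ∧ n + 1 ∈ B}) (𝓝 (f y)) :=
    hf.tendsto.comp (tendsto_nhdsWithin_iff.2 ⟨hy.mono_left hA, Eventually.of_forall hxs⟩)
  simp only [hfx] at hfy
  exact tendsto_nhds_unique hfy (hz.comp hB)

variable {α : Type*} [ConditionallyCompleteLinearOrder α] [TopologicalSpace α] [OrderTopology α]
  [DenselyOrdered α] {f : α → α} {a b : α} {w : ℕ → Ordering} {x : ℕ → α}

theorem exists_nhds_le_map_of_hasOrderCode (hf : ContinuousOn f (Icc a b))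
    (hxs : ∀ n, x n ∈ Icc a b) (hfx : ∀ n, f (x n) = x (n + 1)) (hx : HasOrderCode w x)
    (hw : ∀ σ τ, σ ≠ .eq → τ ≠ .eq → ∃ᶠ n in atTop, w n = σ ∧ w (n + 1) = τ) :
    ∃ p ∈ Icc a b, f p = p ∧ 𝓝 p ≤ map f (𝓝[Icc a p] p) ∧ 𝓝 p ≤ map f (𝓝[Icc p b] p) := by
  have hw_ll := hw .lt .lt (by decide) (by decide)
  have hw_lg := hw .lt .gt (by decide) (by decide)
  have hw_gl := hw .gt .lt (by decide) (by decide)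
  have hw_gg := hw .gt .gt (by decide) (by decide)
  obtain ⟨p, hp_tendsto, hp⟩ := hx.exists_tendsto_of_frequently_lt
    ⟨b, forall_mem_range.2 fun n => (hxs n).2⟩ (hw_ll.mono fun _ => And.left)
  obtain ⟨r, hr_tendsto, hr⟩ := hx.exists_tendsto_of_frequently_gt
    ⟨a, forall_mem_range.2 fun n => (hxs n).1⟩ (hw_gg.mono fun _ => And.left)
  have : (atTop ⊓ 𝓟 {n | w n = .lt}).NeBot :=
    frequently_iff_neBot.1 (hw_ll.mono fun _ => And.left)
  have hpI : p ∈ Icc a b := isClosed_Icc.mem_of_tendsto hp_tendsto (Eventually.of_forall hxs)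
  have hfp : f p = p := map_eq_of_frequently_mem (hf p hpI) hxs hfx hp_tendsto hp_tendsto hw_ll
  obtain rfl : p = r :=
    hfp.symm.trans (map_eq_of_frequently_mem (hf p hpI) hxs hfx hp_tendsto hr_tendsto hw_lg)
  have hcover : ∀ σ (s : Set α), s.OrdConnected → s ⊆ Icc a b → (∀ n, w n = σ → x n ∈ s) →
      Tendsto x (atTop ⊓ 𝓟 {n | w n = σ}) (𝓝 p) → (∃ᶠ n in atTop, w n = σ ∧ w (n + 1) = .lt) →
      (∃ᶠ n in atTop, w n = σ ∧ w (n + 1) = .gt) → 𝓝 p ≤ map f (𝓝[s] p) := by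
    intro σ s _ hs hxσ htendsto hlt hgt
    have hx_within : Tendsto x (atTop ⊓ 𝓟 {n | w n = σ}) (𝓝[s] p) :=
      tendsto_nhdsWithin_iff.2 ⟨htendsto, eventually_inf_principal.2 (Eventually.of_forall hxσ)⟩
    refine nhds_le_map_nhdsWithin_of_frequently (hf.mono hs)
      (hx_within.frequently (frequently_inf_principal.2 (hlt.mono fun n hn => ⟨hn.1, ?_⟩)))
      (hx_within.frequently (frequently_inf_principal.2 (hgt.mono fun n hn => ⟨hn.1, ?_⟩)))
    · exact (hfx n).trans_lt (hp _ hn.2)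
    · exact (hr _ hn.2).trans_eq (hfx n).symm
  exact ⟨p, hpI, hfp,
    hcover .lt _ ordConnected_Icc (Icc_subset_Icc_right hpI.2)
      (fun n hn => ⟨(hxs n).1, (hp n hn).le⟩) hp_tendsto hw_ll hw_lg,
    hcover .gt _ ordConnected_Icc (Icc_subset_Icc_left hpI.1)
      (fun n hn => ⟨(hr n hn).le, (hxs n).2⟩) hr_tendsto hw_gl hw_gg⟩

lemma frequently_atTop_of_periodic {P : ℕ → Prop} {c r : ℕ} (hP : Function.Periodic P c)
    (hc : 0 < c) (hr : P r) : ∃ᶠ n in atTop, P n := by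
  have hshift : ∀ N, P (r + N * c) = P r := fun N => hP.nat_mul N r
  refine frequently_atTop.2 fun N => ⟨r + N * c, ?_, by rwa [hshift]⟩
  exact (Nat.le_mul_of_pos_right N hc).trans (Nat.le_add_left _ _)

end Forcing

section ModelMap

open Set Filter Topology

/-- A continuous map without 2-cycles whose orbit of `1` is a sequence `± 2⁻ⁿ` with signs
`+ + - -` repeating. The value at `0` is `0`. -/
noncomputable def modelMap (x : ℝ) : ℝ :=
  x / 2 * Real.cos (Real.logb 2 x * Real.pi)

lemma abs_modelMap_le (x : ℝ) : |modelMap x| ≤ |x| / 2 := by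
  rw [modelMap, abs_mul, abs_div, abs_two]
  exact mul_le_of_le_one_right (by positivity) (Real.abs_cos_le_one _)

lemma continuous_modelMap : Continuous modelMap := by
  rw [continuous_iff_continuousAt]
  intro x
  rcases eq_or_ne x 0 with rfl | hx
  · have hzero : modelMap 0 = 0 := by simp [modelMap]
    rw [ContinuousAt, hzero]
    refine squeeze_zero_norm abs_modelMap_le ?_
    exact (continuous_abs.div_const 2).tendsto' 0 0 (by simp)
  · have hlog : ContinuousAt (Real.logb 2) x := (Real.continuousAt_log hx).div_const _
    exact (continuousAt_id.div_const 2).mul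
      (Real.continuous_cos.continuousAt.comp (hlog.mul continuousAt_const))

lemma modelMap_of_abs_eq_pow {x : ℝ} {n : ℕ} (hx : |x| = (1 / 2) ^ n) :
    modelMap x = (-1) ^ n * (x / 2) := by
  have hlog : Real.logb 2 x = -n := by
    rw [← Real.logb_abs, hx, Real.logb_pow, one_div, Real.logb_inv,
      Real.logb_self_eq_one one_lt_two, mul_neg_one]
  rw [modelMap, hlog, neg_mul, Real.cos_neg, Real.cos_nat_mul_pi, mul_comm]

lemma abs_modelMap_iterate_one (n : ℕ) : |modelMap^[n] 1| = (1 / 2) ^ n := by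
  induction n with
  | zero => simp
  | succ n ih =>
    rw [Function.iterate_succ_apply', modelMap_of_abs_eq_pow ih, abs_mul, abs_neg_one_pow, abs_div,
      ih, abs_two]
    ring

lemma modelMap_iterate_succ_one (n : ℕ) :
    modelMap^[n + 1] 1 = (-1) ^ n * (modelMap^[n] 1 / 2) := by
  rw [Function.iterate_succ_apply', modelMap_of_abs_eq_pow (abs_modelMap_iterate_one n)]

lemma periodic_cmp_modelMap_iterate_one :
    Function.Periodic (fun n => cmp (modelMap^[n] 1) 0) 4 := by
  intro n
  have hscale : modelMap^[n + 4] 1 = modelMap^[n] 1 * (1 / 16) := by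
    have hsq : ((-1 : ℝ) ^ n) ^ 2 = 1 := by rw [← pow_mul, mul_comm, pow_mul, neg_one_sq, one_pow]
    have hfour : ((-1 : ℝ) ^ n) ^ 4 = 1 := by rw [show 4 = 2 * 2 from rfl, pow_mul, hsq, one_pow]
    simp only [modelMap_iterate_succ_one, pow_succ]
    linear_combination (modelMap^[n] 1 / 16) * hfour
  have hcmp := cmp_mul_pos_right (show (0 : ℝ) < 1 / 16 by norm_num) (modelMap^[n] 1) 0
  rwa [zero_mul, ← hscale] at hcmp

lemma hasOrderCode_modelMap_iterate_one :
    HasOrderCode (fun n => cmp (modelMap^[n] 1) 0) (fun n => modelMap^[n] 1) := by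
  refine hasOrderCode_cmp_zero_of_strictAnti_abs ?_
  simp only [abs_modelMap_iterate_one]
  exact pow_right_strictAnti₀ (by norm_num) (by norm_num)

lemma frequently_cmp_modelMap_iterate_one (σ τ : Ordering) (hσ : σ ≠ .eq) (hτ : τ ≠ .eq) :
    ∃ᶠ n in atTop, cmp (modelMap^[n] 1) 0 = σ ∧ cmp (modelMap^[n + 1] 1) 0 = τ := by
  have hper : Function.Periodic
      (fun n => cmp (modelMap^[n] 1) 0 = σ ∧ cmp (modelMap^[n + 1] 1) 0 = τ) 4 := by
    intro n
    have h₀ := periodic_cmp_modelMap_iterate_one n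
    have h₁ := periodic_cmp_modelMap_iterate_one (n + 1)
    simp only [add_right_comm n 1 4] at h₀ h₁
    simp only [h₀, h₁]
  have h₁ : modelMap^[1] 1 = 1 / 2 := (modelMap_iterate_succ_one 0).trans (by norm_num)
  have h₂ : modelMap^[2] 1 = -1 / 4 := by rw [modelMap_iterate_succ_one, h₁]; norm_num
  have h₃ : modelMap^[3] 1 = -1 / 8 := by rw [modelMap_iterate_succ_one, h₂]; norm_num
  have h₄ : modelMap^[4] 1 = 1 / 16 := by rw [modelMap_iterate_succ_one, h₃]; norm_num
  suffices ∃ r, cmp (modelMap^[r] 1) 0 = σ ∧ cmp (modelMap^[r + 1] 1) 0 = τ by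
    obtain ⟨r, hr⟩ := this
    exact frequently_atTop_of_periodic hper four_pos hr
  match σ, τ, hσ, hτ with
  | .gt, .gt, _, _ => exact ⟨0, by simp, by rw [h₁, cmp_eq_gt_iff]; norm_num⟩
  | .gt, .lt, _, _ =>
    exact ⟨1, by rw [h₁, cmp_eq_gt_iff]; norm_num, by rw [h₂, cmp_eq_lt_iff]; norm_num⟩
  | .lt, .lt, _, _ =>
    exact ⟨2, by rw [h₂, cmp_eq_lt_iff]; norm_num, by rw [h₃, cmp_eq_lt_iff]; norm_num⟩
  | .lt, .gt, _, _ =>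
    exact ⟨3, by rw [h₃, cmp_eq_lt_iff]; norm_num, by rw [h₄, cmp_eq_gt_iff]; norm_num⟩

end ModelMap

section Universality

open Set Filter Topology

lemma nhds_le_map_nhdsWithin_iff_Icc {f : ℝ → ℝ} {s : Set ℝ} {p : ℝ} :
    𝓝 p ≤ map f (𝓝[s] p) ↔
      ∀ ε > 0, ∃ δ > 0, Icc (p - δ) (p + δ) ⊆ f '' (Icc (p - ε) (p + ε) ∩ s) := by
  simp only [← Real.closedBall_eq_Icc]
  exact Metric.nhds_basis_closedBall.le_basis_iff
    ((nhdsWithin_hasBasis Metric.nhds_basis_closedBall s).map f)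

lemma nhds_le_map_both_sides_iff {f : ℝ → ℝ} {a b p : ℝ} (hp : p ∈ Icc a b) :
    (𝓝 p ≤ map f (𝓝[Icc a p] p) ∧ 𝓝 p ≤ map f (𝓝[Icc p b] p)) ↔
      ∀ ε > 0, ∃ δ > 0, Icc (p - δ) (p + δ) ⊆ f '' (Icc p (p + ε) ∩ Icc a b) ∧
        Icc (p - δ) (p + δ) ⊆ f '' (Icc (p - ε) p ∩ Icc a b) := by
  have hleft : ∀ ε > 0, Icc (p - ε) (p + ε) ∩ Icc a p = Icc (p - ε) p ∩ Icc a b := by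
    intro ε hε
    rw [Icc_inter_Icc, Icc_inter_Icc, min_eq_right (by linarith), min_eq_left hp.2]
  have hright : ∀ ε > 0, Icc (p - ε) (p + ε) ∩ Icc p b = Icc p (p + ε) ∩ Icc a b := by
    intro ε hε
    rw [Icc_inter_Icc, Icc_inter_Icc, max_eq_right (by linarith), max_eq_left hp.1]
  rw [nhds_le_map_nhdsWithin_iff_Icc, nhds_le_map_nhdsWithin_iff_Icc]
  constructor
  · rintro ⟨hl, hr⟩ ε hε
    obtain ⟨δ₁, hδ₁, h₁⟩ := hl ε hε
    obtain ⟨δ₂, hδ₂, h₂⟩ := hr ε hε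
    rw [hleft ε hε] at h₁
    rw [hright ε hε] at h₂
    refine ⟨min δ₁ δ₂, lt_min hδ₁ hδ₂, (Icc_subset_Icc ?_ ?_).trans h₂,
      (Icc_subset_Icc ?_ ?_).trans h₁⟩
    all_goals grind
  · intro h
    refine ⟨fun ε hε => ?_, fun ε hε => ?_⟩ <;> obtain ⟨δ, hδ, hr, hl⟩ := h ε hε
    · exact ⟨δ, hδ, by rwa [hleft ε hε]⟩
    · exact ⟨δ, hδ, by rwa [hright ε hε]⟩

lemma IsUniversalF1.exists_lt_iff_modelMap_lt {a b : ℝ} {f : ℝ → ℝ} (hf : IsUniversalF1 a b f) :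
    ∃ q ∈ Icc a b, ∀ m n, modelMap^[m] 1 < modelMap^[n] 1 ↔ f^[m] q < f^[n] q := by
  refine hf (-1) 1 (by norm_num) modelMap continuous_modelMap.continuousOn ?_ ?_ 1 (by simp)
  · intro x hx
    refine abs_le.1 ((abs_modelMap_le x).trans ?_)
    linarith [abs_le.2 hx]
  · rintro ⟨x, -, y, -, hxy, rfl, hyx⟩
    have hx := abs_modelMap_le x
    have hy := abs_modelMap_le (modelMap x)
    rw [hyx] at hy
    have hx_zero : |x| = 0 := by linarith [abs_nonneg x]
    have hy_zero : |modelMap x| = 0 := by linarith [abs_nonneg (modelMap x)]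
    exact hxy ((abs_eq_zero.1 hx_zero).trans (abs_eq_zero.1 hy_zero).symm)

theorem IsUniversalF1.exists_nhds_le_map {a b : ℝ} {f : ℝ → ℝ} (hf : ContinuousOn f (Icc a b))
    (hmaps : MapsTo f (Icc a b) (Icc a b)) (hu : IsUniversalF1 a b f) :
    ∃ p ∈ Icc a b, f p = p ∧ 𝓝 p ≤ map f (𝓝[Icc a p] p) ∧ 𝓝 p ≤ map f (𝓝[Icc p b] p) := by
  obtain ⟨q, hq, hpattern⟩ := hu.exists_lt_iff_modelMap_lt
  exact exists_nhds_le_map_of_hasOrderCode hf (fun n => hmaps.iterate n hq)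
    (fun n => (Function.iterate_succ_apply' f n q).symm)
    (hasOrderCode_modelMap_iterate_one.of_lt_iff_lt hpattern) frequently_cmp_modelMap_iterate_one

theorem isUniversalF1_of_nhds_le_map {a b p : ℝ} {f : ℝ → ℝ} (hf : ContinuousOn f (Icc a b))
    (hp : p ∈ Icc a b) (hfp : f p = p) (hleft : 𝓝 p ≤ map f (𝓝[Icc a p] p))
    (hright : 𝓝 p ≤ map f (𝓝[Icc p b] p)) : IsUniversalF1 a b f := by
  intro c d _ g hg hgmaps hno2 r hr
  have hperiod : ∀ x ∈ Icc c d, g (g x) = x → g x = x := fun x hx hggx => by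
    by_contra hne
    exact hno2 ⟨x, hx, g x, hgmaps hx, Ne.symm hne, rfl, hggx⟩
  obtain ⟨q, hq, hcode⟩ := exists_hasOrderCode_iterate hf hp hfp hleft hright
    (w := fun n => cmp (g^[n] r) (g (g^[n] r))) fun n hn => by
      rw [cmp_eq_eq_iff] at hn ⊢
      rw [Function.iterate_succ_apply', ← hn, ← hn]
  exact ⟨q, hq, fun m n =>
    lt_iff_lt_of_cmp_eq_cmp ((hasOrderCode_iterate hg hgmaps hperiod hr).cmp_eq_cmp hcode m n)⟩

end Universality

theorem stmt_16_general (a b : ℝ) (f : ℝ → ℝ)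
    (hf : ContinuousOn f (Set.Icc a b))
    (hmaps : Set.MapsTo f (Set.Icc a b) (Set.Icc a b)) :
    IsUniversalF1 a b f ↔
    ∃ p ∈ Set.Icc a b, f p = p ∧
      ∀ ε > (0 : ℝ), ∃ δ > (0 : ℝ),
        Set.Icc (p - δ) (p + δ) ⊆ f '' (Set.Icc p (p + ε) ∩ Set.Icc a b) ∧
        Set.Icc (p - δ) (p + δ) ⊆ f '' (Set.Icc (p - ε) p ∩ Set.Icc a b) := by
  constructor
  · intro hu
    obtain ⟨p, hp, hfp, hcover⟩ := hu.exists_nhds_le_map hf hmaps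
    exact ⟨p, hp, hfp, (nhds_le_map_both_sides_iff hp).1 hcover⟩
  · rintro ⟨p, hp, hfp, hcover⟩
    obtain ⟨hleft, hright⟩ := (nhds_le_map_both_sides_iff hp).2 hcover
    exact isUniversalF1_of_nhds_le_map hf hp hfp hleft hright

/-- Characterization of universal maps in the first Sharkovsky class: some fixed
point p has the property that images of arbitrarily small one-sided neighbourhoods
of p cover two-sided neighbourhoods of p. -/
theorem stmt_16 (a b : ℝ) (hab : a ≤ b) (f : ℝ → ℝ)
    (hf : ContinuousOn f (Set.Icc a b))
    (hmaps : Set.MapsTo f (Set.Icc a b) (Set.Icc a b))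
    (hno2 : ¬ ∃ x ∈ Set.Icc a b, ∃ y ∈ Set.Icc a b, x ≠ y ∧ f x = y ∧ f y = x) :
    IsUniversalF1 a b f ↔
    ∃ p ∈ Set.Icc a b, f p = p ∧
      ∀ ε > (0 : ℝ), ∃ δ > (0 : ℝ),
        Set.Icc (p - δ) (p + δ) ⊆ f '' (Set.Icc p (p + ε) ∩ Set.Icc a b) ∧
        Set.Icc (p - δ) (p + δ) ⊆ f '' (Set.Icc (p - ε) p ∩ Set.Icc a b) := by
  exact stmt_16_general a b f hf hmaps
end

section
/- Define f : [−1, 1] → ℝ by f(x) = x·sin(1/x) for x ≠ 0 and f(0) = 0. Then f maps [−1, 1] into itself, is continuous, admits no 2-cycle, and is universal for the first Sharkovsky class: for every closed bounded interval J, every continuous g : J → J admitting no 2-cycle, and every p ∈ J, there exists q ∈ [−1, 1] such that the sequences (gⁿ(p))_{n≥0} and (fⁿ(q))_{n≥0} have the same order pattern. -/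
/-!
For a continuous interval map `g` without 2-cycles, the first step `x < g x`, `x = g x` or
`g x < x` already decides on which side of `x` the whole forward orbit stays. Hence the order
pattern of an orbit is determined by its sequence of first steps, and equality is the only
direction that forces the next one. It remains to realize every such sequence of directions by an
orbit of `f`. At the points `e k = 1 / (π / 2 + k π)` one has `f (e k) = (-1) ^ k * e k`, so `f`
maps `[e (2 n + 1), e (2 n)]`, and by evenness also its mirror image, onto an interval
containing both of the corresponding intervals for `n + 1`. A compactness argument yields a point
whose orbit visits at each time `n` the left interval, `{0}` or the right interval, as prescribed;
since the intervals for `n + 1` lie closer to `0` than those for `n`, the orbit moves in the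
prescribed directions.
-/

open Function Set OrderDual

/-- `g` restricts to a member of the first Sharkovsky class on `[a, b]`: a continuous self-map
without 2-cycle. Only the values of `g` on `[a, b]` matter. -/
structure IsSharkovskyF1 {α : Type*} [Preorder α] [TopologicalSpace α] (a b : α) (g : α → α) :
    Prop where
  continuousOn : ContinuousOn g (Icc a b)
  mapsTo : MapsTo g (Icc a b) (Icc a b)
  not_twoCycle : ¬ ∃ x ∈ Icc a b, ∃ y ∈ Icc a b, x ≠ y ∧ g x = y ∧ g y = x

namespace IsSharkovskyF1

section Preorder

variable {α : Type*} [Preorder α] [TopologicalSpace α] {a b x : α} {g : α → α}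

theorem dual (h : IsSharkovskyF1 a b g) :
    IsSharkovskyF1 (toDual b) (toDual a) (toDual ∘ g ∘ ofDual) where
  continuousOn := by
    rw [Icc_toDual]
    exact h.continuousOn
  mapsTo := by
    rw [Icc_toDual]
    exact h.mapsTo
  not_twoCycle := by
    rw [Icc_toDual]
    exact h.not_twoCycle

theorem isFixedPt_of_apply_apply_eq (h : IsSharkovskyF1 a b g) (hx : x ∈ Icc a b)
    (hgg : g (g x) = x) : IsFixedPt g x := by
  by_contra hne
  exact h.not_twoCycle ⟨x, hx, g x, h.mapsTo hx, Ne.symm hne, rfl, hgg⟩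

end Preorder

variable {α β : Type*}
  [ConditionallyCompleteLinearOrder α] [DenselyOrdered α] [TopologicalSpace α] [OrderTopology α]
  [ConditionallyCompleteLinearOrder β] [DenselyOrdered β] [TopologicalSpace β] [OrderTopology β]
  {a b p w x y : α} {g : α → α} {m n : ℕ}

theorem exists_isFixedPt (h : IsSharkovskyF1 a b g) (hax : a ≤ x) (hxy : x ≤ y) (hyb : y ≤ b)
    (hx : x ≤ g (g x)) (hy : g (g y) ≤ y) : ∃ z ∈ Icc x y, IsFixedPt g z := by
  have hsub : Icc x y ⊆ Icc a b := Icc_subset_Icc hax hyb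
  obtain ⟨z, hz, hgg⟩ := exists_mem_Icc_isFixedPt
    ((h.continuousOn.comp h.continuousOn h.mapsTo).mono hsub) hxy hx hy
  exact ⟨z, hz, h.isFixedPt_of_apply_apply_eq (hsub hz) hgg⟩

theorem lt_apply_apply (h : IsSharkovskyF1 a b g) (hx : x ∈ Icc a b) (hxg : x < g x) :
    x < g (g x) := by
  -- If `g (g x) ≤ x`, let `z` be the last point of `[a, x]` not moved up. Some `y ∈ (z, x]` is
  -- mapped to `x`, so `y ≤ g (g y)` and `g` has a fixed point in `[y, x]`, beyond `z`.
  by_contra! hggx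
  let S : Set α := {t ∈ Icc a x | g t ≤ t}
  have hS : IsCompact S := isCompact_Icc.of_isClosed_subset
    (isClosed_Icc.isClosed_le (h.continuousOn.mono (Icc_subset_Icc_right hx.2)) continuousOn_id)
    (sep_subset _ _)
  have hSne : S.Nonempty := by
    have ha : a ∈ Icc a b := left_mem_Icc.2 (hx.1.trans hx.2)
    obtain ⟨t, ht, hgt⟩ := h.exists_isFixedPt le_rfl hx.1 hx.2 (h.mapsTo (h.mapsTo ha)).1 hggx
    exact ⟨t, ht, hgt.le⟩
  obtain ⟨z, ⟨⟨haz, hzx⟩, hgz⟩, hzmax⟩ := hS.exists_isGreatest hSne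
  obtain ⟨y, ⟨hzy, hyx⟩, hgy⟩ := intermediate_value_Icc hzx
    (h.continuousOn.mono (Icc_subset_Icc haz hx.2)) ⟨hgz.trans hzx, hxg.le⟩
  have hzy' : z < y := by
    refine hzy.lt_of_ne ?_
    rintro rfl
    have hz_eq : z = x := hzx.antisymm (hgy ▸ hgz)
    exact hxg.not_ge (hz_eq ▸ hgz)
  obtain ⟨t, ⟨hyt, htx⟩, hgt⟩ := h.exists_isFixedPt (haz.trans hzy) hyx hx.2
    (hgy ▸ hyx.trans hxg.le) hggx
  exact (hzy'.trans_le hyt).not_ge (hzmax ⟨⟨haz.trans (hzy.trans hyt), htx⟩, hgt.le⟩)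

theorem le_of_le_apply (h : IsSharkovskyF1 a b g) (hax : a ≤ x) (hwb : w ≤ b) (hxw : x < w)
    (hgw : g w ≤ x) (hxy : x ≤ y) (hwy : w ≤ g y) : w ≤ y := by
  -- Otherwise some `t ∈ [y, w)` is mapped to `w`, so `t < g t` while `g (g t) = g w ≤ x ≤ t`.
  by_contra! hyw
  have hay : a ≤ y := hax.trans hxy
  obtain ⟨z, ⟨hyz, hzw⟩, hgz⟩ := exists_mem_Icc_isFixedPt
    (h.continuousOn.mono (Icc_subset_Icc hay hwb)) hyw.le (hyw.le.trans hwy) (hgw.trans hxw.le)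
  obtain ⟨t, ⟨hyt, htz⟩, hgt⟩ := intermediate_value_Icc' hyz
    (h.continuousOn.mono (Icc_subset_Icc hay (hzw.trans hwb))) ⟨hgz.le.trans hzw, hwy⟩
  have htw : t < w := by
    refine (htz.trans hzw).lt_of_ne ?_
    rintro rfl
    exact (hgw.trans_lt hxw).ne hgt
  have htt : t < g (g t) :=
    h.lt_apply_apply ⟨hay.trans hyt, htw.le.trans hwb⟩ (hgt.symm ▸ htw)
  exact htt.not_ge (hgt.symm ▸ hgw.trans (hxy.trans hyt))

theorem lt_iterate_succ (h : IsSharkovskyF1 a b g) (hx : x ∈ Icc a b) (hxg : x < g x) (n : ℕ) :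
    x < g^[n + 1] x := by
  induction n using Nat.strong_induction_on with
  | _ n ih =>
  by_contra! hret
  rcases n with _ | n
  · exact hret.not_gt hxg
  have hlt : x < g^[n + 1] x := ih n n.lt_succ_self
  have hle : ∀ k ≤ n + 1, x ≤ g^[k] x := by
    rintro (_ | k) hk
    · exact le_rfl
    · exact (ih k hk).le
  have hgw : g (g^[n + 1] x) ≤ x := by rwa [← iterate_succ_apply' g]
  have hwx : g^[n + 1] x ≤ g^[0] x :=
    Nat.decreasingInduction (motive := fun k _ ↦ g^[n + 1] x ≤ g^[k] x)
      (fun k hk hwk ↦ h.le_of_le_apply hx.1 (h.mapsTo.iterate (n + 1) hx).2 hlt hgw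
        (hle k hk.le) (by rwa [← iterate_succ_apply' g]))
      le_rfl (Nat.zero_le _)
  exact hlt.not_ge hwx

theorem iterate_succ_lt (h : IsSharkovskyF1 a b g) (hx : x ∈ Icc a b) (hgx : g x < x) (n : ℕ) :
    g^[n + 1] x < x := by
  have hsemi : Semiconj toDual g (toDual ∘ g ∘ ofDual) := fun _ ↦ rfl
  have hlt := h.dual.lt_iterate_succ (x := toDual x) ⟨hx.2, hx.1⟩ hgx n
  rwa [← (hsemi.iterate_right (n + 1)).eq, toDual_lt_toDual] at hlt

theorem cmp_iterate_succ (h : IsSharkovskyF1 a b g) (hx : x ∈ Icc a b) (n : ℕ) :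
    cmp x (g^[n + 1] x) = cmp x (g x) := by
  rcases lt_trichotomy x (g x) with hlt | heq | hgt
  · rw [hlt.cmp_eq_lt, (h.lt_iterate_succ hx hlt n).cmp_eq_lt]
  · rw [iterate_fixed heq.symm, ← heq]
  · rw [hgt.cmp_eq_gt, (h.iterate_succ_lt hx hgt n).cmp_eq_gt]

theorem cmp_iterate_of_lt (h : IsSharkovskyF1 a b g) (hp : p ∈ Icc a b) (hmn : m < n) :
    cmp (g^[m] p) (g^[n] p) = cmp (g^[m] p) (g^[m + 1] p) := by
  obtain ⟨k, rfl⟩ := Nat.exists_eq_add_of_lt hmn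
  rw [add_assoc, add_comm m (k + 1), iterate_add_apply,
    h.cmp_iterate_succ (h.mapsTo.iterate m hp), iterate_succ_apply']

theorem cmp_iterate_eq_cmp_iterate {c d q : β} {f : β → β} (hg : IsSharkovskyF1 a b g)
    (hf : IsSharkovskyF1 c d f) (hp : p ∈ Icc a b) (hq : q ∈ Icc c d)
    (hstep : ∀ n, cmp (g^[n] p) (g^[n + 1] p) = cmp (f^[n] q) (f^[n + 1] q)) (m n : ℕ) :
    cmp (g^[m] p) (g^[n] p) = cmp (f^[m] q) (f^[n] q) := by
  rcases lt_trichotomy m n with hmn | rfl | hnm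
  · rw [hg.cmp_iterate_of_lt hp hmn, hf.cmp_iterate_of_lt hq hmn, hstep]
  · rw [cmp_self_eq_eq, cmp_self_eq_eq]
  · rw [cmp_eq_cmp_symm, hg.cmp_iterate_of_lt hp hnm, hf.cmp_iterate_of_lt hq hnm, hstep]

end IsSharkovskyF1

theorem exists_forall_iterate_mem_s19 {X : Type*} [TopologicalSpace X] {f : X → X} {K : ℕ → Set X}
    (hf : Continuous f) (hcompact : IsCompact (K 0)) (hclosed : ∀ n, IsClosed (K n))
    (hne : ∀ n, (K n).Nonempty) (hsurj : ∀ n, SurjOn f (K n) (K (n + 1))) :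
    ∃ x, ∀ n, f^[n] x ∈ K n := by
  let L : ℕ → Set X := fun n ↦ {x | ∀ m ≤ n, f^[m] x ∈ K m}
  have hL_surj : ∀ n, SurjOn f^[n] (L n) (K n) := by
    intro n
    induction n with
    | zero => exact fun y hy ↦ ⟨y, fun m hm ↦ by rwa [Nat.le_zero.1 hm], rfl⟩
    | succ n ih =>
      intro z hz
      obtain ⟨y, hy, rfl⟩ := hsurj n hz
      obtain ⟨x, hx, rfl⟩ := ih hy
      have hx_succ : f^[n + 1] x = f (f^[n] x) := iterate_succ_apply' f n x
      refine ⟨x, fun m hm ↦ ?_, hx_succ⟩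
      rcases Nat.le_succ_iff.1 hm with hm | rfl
      · exact hx m hm
      · rwa [hx_succ]
  have hL_closed : ∀ n, IsClosed (L n) := fun n ↦ by
    simp only [L, ofPred_forall]
    exact isClosed_biInter fun m _ ↦ (hclosed m).preimage (hf.iterate m)
  have hL_compact : IsCompact (L 0) :=
    hcompact.of_isClosed_subset (hL_closed 0) fun x hx ↦ hx 0 le_rfl
  obtain ⟨x, hx⟩ := IsCompact.nonempty_iInter_of_sequence_nonempty_isCompact_isClosed L
    (fun n x hx m hm ↦ hx m (hm.trans n.le_succ))
    (fun n ↦ ((hne n).mono (hL_surj n)).of_image) hL_compact hL_closed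
  exact ⟨x, fun n ↦ mem_iInter.1 hx n n le_rfl⟩

section AlternatingFunction

/-- The interval from which an orbit point at time `n` moves in direction `o`: the points of a band
on the left of `0` go up (`lt`), those of its mirror image go down (`gt`), and `0` stays (`eq`).
Only every second interval between consecutive `e k` is used, so that the bands at time
`n + 1` lie strictly closer to `0` than the two outer bands at time `n`. -/
def directionBand (e : ℕ → ℝ) (n : ℕ) : Ordering → Set ℝ
  | .lt => Icc (-e (2 * n)) (-e (2 * n + 1))
  | .eq => {0}
  | .gt => Icc (e (2 * n + 1)) (e (2 * n))

variable {e : ℕ → ℝ} {f : ℝ → ℝ} {n : ℕ} {o o' : Ordering} {r x y : ℝ}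

theorem isCompact_directionBand (e : ℕ → ℝ) (n : ℕ) (o : Ordering) :
    IsCompact (directionBand e n o) := by
  cases o
  exacts [isCompact_Icc, isCompact_singleton, isCompact_Icc]

theorem directionBand_nonempty (he : Antitone e) (n : ℕ) (o : Ordering) :
    (directionBand e n o).Nonempty := by
  have hle : e (2 * n + 1) ≤ e (2 * n) := he (Nat.le_succ _)
  cases o
  exacts [nonempty_Icc.2 (neg_le_neg hle), singleton_nonempty 0, nonempty_Icc.2 hle]

theorem abs_le_of_mem_directionBand (hpos : ∀ k, 0 < e k) (hx : x ∈ directionBand e n o) :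
    |x| ≤ e (2 * n) := by
  have h₀ := hpos (2 * n)
  have h₁ := hpos (2 * n + 1)
  rw [abs_le]
  cases o with
  | lt => exact ⟨hx.1, by linarith [hx.2]⟩
  | eq => rw [mem_singleton_iff.1 hx]; exact ⟨by linarith, h₀.le⟩
  | gt => exact ⟨by linarith [hx.1], hx.2⟩

theorem cmp_eq_of_mem_directionBand (he : StrictAnti e) (hpos : ∀ k, 0 < e k)
    (ho : o = .eq → o' = .eq) (hx : x ∈ directionBand e n o)
    (hy : y ∈ directionBand e (n + 1) o') : cmp x y = o := by
  have hy_abs := abs_le.1 (abs_le_of_mem_directionBand hpos hy)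
  have hlt : e (2 * (n + 1)) < e (2 * n + 1) := he (by lia)
  cases o with
  | lt => exact LT.lt.cmp_eq_lt (by linarith [hx.2])
  | eq =>
    obtain rfl := ho rfl
    rw [mem_singleton_iff.1 hx, mem_singleton_iff.1 hy, cmp_self_eq_eq]
  | gt => exact LT.lt.cmp_eq_gt (by linarith [hx.1])

theorem surjOn_Icc_of_alternating (hf : Continuous f) (he : Antitone e)
    (halt : ∀ k, f (e k) = (-1) ^ k * e k) (n : ℕ) :
    SurjOn f (Icc (e (2 * n + 1)) (e (2 * n))) (Icc (-e (2 * (n + 1))) (e (2 * (n + 1)))) := by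
  have h_even : f (e (2 * n)) = e (2 * n) := by simp [halt]
  have h_odd : f (e (2 * n + 1)) = -e (2 * n + 1) := by simp [halt, pow_succ]
  have hle : e (2 * (n + 1)) ≤ e (2 * n + 1) := he (by lia)
  have hle' : e (2 * n + 1) ≤ e (2 * n) := he (Nat.le_succ _)
  refine Subset.trans ?_ (intermediate_value_Icc hle' hf.continuousOn)
  rw [h_even, h_odd]
  exact Icc_subset_Icc (neg_le_neg hle) (hle.trans hle')

theorem surjOn_directionBand (hf : Continuous f) (heven : f.Even) (hf0 : f 0 = 0) (he : Antitone e)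
    (hpos : ∀ k, 0 < e k) (halt : ∀ k, f (e k) = (-1) ^ k * e k) (ho : o = .eq → o' = .eq) :
    SurjOn f (directionBand e n o) (directionBand e (n + 1) o') := by
  intro y hy
  obtain ⟨x, hx, rfl⟩ :=
    surjOn_Icc_of_alternating hf he halt n (abs_le.1 (abs_le_of_mem_directionBand hpos hy))
  cases o with
  | lt => exact ⟨-x, ⟨neg_le_neg hx.2, neg_le_neg hx.1⟩, heven x⟩
  | eq =>
    obtain rfl := ho rfl
    exact ⟨0, rfl, hf0.trans (mem_singleton_iff.1 hy).symm⟩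
  | gt => exact ⟨x, hx, rfl⟩

theorem exists_forall_cmp_iterate_eq (hf : Continuous f) (heven : f.Even) (hf0 : f 0 = 0)
    (he : StrictAnti e) (hpos : ∀ k, 0 < e k) (halt : ∀ k, f (e k) = (-1) ^ k * e k)
    {σ : ℕ → Ordering} (hσ : ∀ n, σ n = .eq → σ (n + 1) = .eq) :
    ∃ q, |q| ≤ e 0 ∧ ∀ n, cmp (f^[n] q) (f^[n + 1] q) = σ n := by
  obtain ⟨q, hq⟩ := exists_forall_iterate_mem_s19 (K := fun n ↦ directionBand e n (σ n)) hf
    (isCompact_directionBand e 0 _) (fun n ↦ (isCompact_directionBand e n _).isClosed)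
    (fun n ↦ directionBand_nonempty he.antitone n _)
    (fun n ↦ surjOn_directionBand hf heven hf0 he.antitone hpos halt (hσ n))
  exact ⟨q, abs_le_of_mem_directionBand hpos (hq 0),
    fun n ↦ cmp_eq_of_mem_directionBand he hpos (hσ n) (hq n) (hq (n + 1))⟩

theorem isSharkovskyF1_of_even_of_abs_le (hf : Continuous f) (heven : f.Even)
    (hle : ∀ x, |f x| ≤ |x|) (r : ℝ) : IsSharkovskyF1 (-r) r f where
  continuousOn := hf.continuousOn
  mapsTo := fun x hx ↦ abs_le.1 ((hle x).trans (abs_le.2 hx))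
  not_twoCycle := by
    rintro ⟨x, -, y, -, hne, rfl, hyx⟩
    have habs : |f x| = |x| := (hle x).antisymm (by simpa only [hyx] using hle (f x))
    rcases abs_eq_abs.1 habs with h | h
    · exact hne h.symm
    · rw [h, heven] at hyx
      exact hne hyx.symm

theorem isUniversalF1_of_alternating (hf : Continuous f) (heven : f.Even)
    (hle : ∀ x, |f x| ≤ |x|) (he : StrictAnti e) (hpos : ∀ k, 0 < e k)
    (halt : ∀ k, f (e k) = (-1) ^ k * e k) (hr : e 0 ≤ r) : IsUniversalF1 (-r) r f := by
  intro c d _ g hcont hmaps hcycle p hp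
  have hf0 : f 0 = 0 := by simpa using hle 0
  have habsorb : ∀ n, cmp (g^[n] p) (g^[n + 1] p) = .eq →
      cmp (g^[n + 1] p) (g^[n + 2] p) = .eq := by
    intro n hn
    rw [cmp_eq_eq_iff, iterate_succ_apply'] at hn
    simp only [iterate_succ_apply', ← hn, cmp_self_eq_eq]
  obtain ⟨q, hq, hstep⟩ := exists_forall_cmp_iterate_eq hf heven hf0 he hpos halt habsorb
  have hq_mem : q ∈ Icc (-r) r := abs_le.1 (hq.trans hr)
  have hg : IsSharkovskyF1 c d g := ⟨hcont, hmaps, hcycle⟩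
  exact ⟨q, hq_mem, fun m n ↦ lt_iff_lt_of_cmp_eq_cmp <|
    hg.cmp_iterate_eq_cmp_iterate (isSharkovskyF1_of_even_of_abs_le hf heven hle r) hp hq_mem
      (fun k ↦ (hstep k).symm) m n⟩

end AlternatingFunction

section MulSinInv

open Real

/-- The map `x * sin (1 / x)`, extended by `0` at `0`, where the factor `x` vanishes. -/
noncomputable def mulSinInv (x : ℝ) : ℝ := x * sin x⁻¹

theorem abs_mulSinInv_le (x : ℝ) : |mulSinInv x| ≤ |x| := by
  rw [mulSinInv, abs_mul]
  exact mul_le_of_le_one_right (abs_nonneg x) (abs_sin_le_one _)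

theorem even_mulSinInv : mulSinInv.Even := fun x ↦ by
  simp only [mulSinInv, inv_neg, sin_neg, neg_mul_neg]

theorem continuous_mulSinInv : Continuous mulSinInv := by
  refine continuous_iff_continuousAt.2 fun x ↦ ?_
  rcases eq_or_ne x 0 with rfl | hx
  · rw [ContinuousAt, mulSinInv, zero_mul]
    exact squeeze_zero_norm abs_mulSinInv_le (continuous_abs.tendsto' 0 0 abs_zero)
  · exact continuousAt_id.mul (continuous_sin.continuousAt.comp (continuousAt_inv₀ hx))

/-- The points `1 / (π / 2 + k π)` at which `sin (1 / x)` takes the values `±1`. -/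
noncomputable def invSinExtremum (k : ℕ) : ℝ := (π / 2 + k * π)⁻¹

theorem invSinExtremum_pos (k : ℕ) : 0 < invSinExtremum k := by
  unfold invSinExtremum
  positivity

theorem strictAnti_invSinExtremum : StrictAnti invSinExtremum := fun j k hjk ↦ by
  unfold invSinExtremum
  gcongr

theorem invSinExtremum_zero_le_one : invSinExtremum 0 ≤ 1 := by
  rw [invSinExtremum, Nat.cast_zero, zero_mul, add_zero]
  exact inv_le_one_of_one_le₀ one_le_pi_div_two

theorem mulSinInv_invSinExtremum (k : ℕ) :
    mulSinInv (invSinExtremum k) = (-1) ^ k * invSinExtremum k := by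
  rw [mulSinInv, invSinExtremum, inv_inv, sin_add_nat_mul_pi, sin_pi_div_two, mul_one, mul_comm]

end MulSinInv

/-- The map f(x) = x sin(1/x) is a continuous self-map of [-1,1] with no 2-cycle
which is universal for the first Sharkovsky class. -/
theorem stmt_19 (f : ℝ → ℝ) (hf0 : f 0 = 0)
    (hfx : ∀ x : ℝ, x ≠ 0 → f x = x * Real.sin (1 / x)) :
    Set.MapsTo f (Set.Icc (-1 : ℝ) 1) (Set.Icc (-1 : ℝ) 1) ∧
    ContinuousOn f (Set.Icc (-1 : ℝ) 1) ∧
    (¬ ∃ x ∈ Set.Icc (-1 : ℝ) 1, ∃ y ∈ Set.Icc (-1 : ℝ) 1,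
      x ≠ y ∧ f x = y ∧ f y = x) ∧
    IsUniversalF1 (-1) 1 f := by
  obtain rfl : f = mulSinInv := funext fun x ↦ by
    rcases eq_or_ne x 0 with rfl | hx
    · rw [hf0, mulSinInv, zero_mul]
    · rw [hfx x hx, one_div, mulSinInv]
  have hF1 : IsSharkovskyF1 (-1) 1 mulSinInv :=
    isSharkovskyF1_of_even_of_abs_le continuous_mulSinInv even_mulSinInv abs_mulSinInv_le 1
  exact ⟨hF1.mapsTo, hF1.continuousOn, hF1.not_twoCycle,
    isUniversalF1_of_alternating continuous_mulSinInv even_mulSinInv abs_mulSinInv_le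
      strictAnti_invSinExtremum invSinExtremum_pos mulSinInv_invSinExtremum
      invSinExtremum_zero_le_one⟩
end
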